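/- arXiv:1812.00039 — 3 statements merged into one kernel-verified Lean document; each statement's English description precedes it below -/
import Mathlib

section
/- Let 0 < α < 1, 1 < p < ∞, ν > 0 and T > 0. Let σ : [0,T] × ℝ^d → ℝ be jointly measurable with sup_{0≤s≤T} (‖σ(s,·)‖_{L^∞} + ‖σ(s,·)‖_{L^p} + [σ(s,·)]_α) = M < ∞. Fix an index i ∈ {1,…,d} and define for t ∈ (0,T] the function (Uσ)(t)(x) = ∫_0^t ((∂_i g_{ν(t-s)}) * σ(s,·))(x) ds. Then there is a constant C depending only on the dimension d such that for every t ∈ (0,T], ‖(Uσ)(t)‖_{L^∞} + ‖(Uσ)(t)‖_{L^p} + [(Uσ)(t)]_α ≤ C (T/ν)^{1/2} M. -/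
/-!
The estimate rests on one fact: `|∂_i g_s| ≤ 2^{d/2} s^{-1/2} g_{2s}` pointwise (`abs_dKer_le`),
so `‖∂_i g_s‖_{L¹} ≤ 2^{d/2} s^{-1/2}`. With `s` replaced by `ν(t-s)` this is integrable in time,
and the majorant `kerMaj` has total mass `2 · 2^{d/2} √(t/ν)` on `(0,t) × ℝ^d`. Thus `Uσ(t)` is
dominated by an average of translates of `σ(s,·)` against a finite measure with that mass.

All three norms are translation invariant, so each is bounded by the mass times `M`. The sup bound
is immediate (`abs_duhamel_le`); the Hölder bound is the same sup bound for the integrand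
`σ(s,x-z) - σ(s,y-z)`, boundedness of `σ` giving the integrability needed to subtract the integrals;
the `L^p` bound is Minkowski's integral inequality (`lintegral_rpow_average_le`).
-/

open MeasureTheory Real

/-- The Gaussian heat kernel `g_{s}(x) = (4πs)^{-d/2} exp(-|x|²/(4s))` on `ℝ^d`. -/
noncomputable def heatKer (d : ℕ) (s : ℝ) (x : EuclideanSpace ℝ (Fin d)) : ℝ :=
  (4 * Real.pi * s) ^ (-(d : ℝ) / 2) * Real.exp (-‖x‖ ^ 2 / (4 * s))

/-- The i-th partial derivative `∂_i g_s` of the heat kernel. -/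
noncomputable def dKer (d : ℕ) (s : ℝ) (i : Fin d) (y : EuclideanSpace ℝ (Fin d)) : ℝ :=
  fderiv ℝ (heatKer d s) y (EuclideanSpace.single i 1)

/-! ### Gaussian bound for the kernel -/

/-- A Gaussian dominating `|∂_i g_s|`: `s^{-1/2} 2^{d/2} g_{2s}`. -/
noncomputable def kerMaj (d : ℕ) (s : ℝ) (y : EuclideanSpace ℝ (Fin d)) : ℝ :=
  (√s)⁻¹ * (2 ^ ((d : ℝ) / 2) * heatKer d (2 * s) y)

/-- The identity `∂_i g_s(y) = -(y_i / 2s) g_s(y)`. It holds for every real `s`: at `s = 0` both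
sides vanish because division by zero gives zero. -/
lemma dKer_eq (d : ℕ) (s : ℝ) (i : Fin d) (y : EuclideanSpace ℝ (Fin d)) :
    dKer d s i y = -(y i / (2 * s)) * heatKer d s y := by
  have h1 : HasFDerivAt (fun x : EuclideanSpace ℝ (Fin d) => ‖x‖ ^ 2)
      (2 • (innerSL ℝ y)) y := by
    simpa using (hasFDerivAt_id y).norm_sq
  have h2 : HasFDerivAt (heatKer d s) _ y :=
    (((h1.neg.mul_const ((4 * s)⁻¹)).exp).const_mul ((4 * Real.pi * s) ^ (-(d : ℝ) / 2)))
  unfold dKer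
  rw [h2.fderiv]
  simp [heatKer, EuclideanSpace.inner_single_right, div_eq_mul_inv]
  ring

lemma measurable_heatKer (d : ℕ) :
    Measurable (fun q : ℝ × EuclideanSpace ℝ (Fin d) => heatKer d q.1 q.2) := by
  unfold heatKer
  fun_prop

lemma measurable_dKer (d : ℕ) (i : Fin d) :
    Measurable (fun q : ℝ × EuclideanSpace ℝ (Fin d) => dKer d q.1 i q.2) := by
  simp only [dKer_eq]
  exact (by fun_prop : Measurable (fun q : ℝ × EuclideanSpace ℝ (Fin d) =>
    -(q.2 i / (2 * q.1)))).mul (measurable_heatKer d)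

lemma measurable_kerMaj (d : ℕ) :
    Measurable (fun q : ℝ × EuclideanSpace ℝ (Fin d) => kerMaj d q.1 q.2) := by
  unfold kerMaj
  have h := (measurable_heatKer d).comp
    (by fun_prop : Measurable (fun q : ℝ × EuclideanSpace ℝ (Fin d) => (2 * q.1, q.2)))
  exact (by fun_prop : Measurable (fun q : ℝ × EuclideanSpace ℝ (Fin d) => (√q.1)⁻¹)).mul
    (h.const_mul _)

lemma heatKer_nonneg (d : ℕ) {s : ℝ} (hs : 0 < s) (y : EuclideanSpace ℝ (Fin d)) :
    0 ≤ heatKer d s y := by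
  unfold heatKer
  positivity

lemma kerMaj_nonneg (d : ℕ) {s : ℝ} (hs : 0 < s) (y : EuclideanSpace ℝ (Fin d)) :
    0 ≤ kerMaj d s y := by
  have := heatKer_nonneg d (by positivity : 0 < 2 * s) y
  unfold kerMaj
  positivity

lemma integral_heatKer (d : ℕ) {s : ℝ} (hs : 0 < s) : ∫ y, heatKer d s y = 1 := by
  have h := GaussianFourier.integral_rexp_neg_mul_sq_norm (V := EuclideanSpace ℝ (Fin d))
    (b := (4 * s)⁻¹) (by positivity)
  have he : ∀ y : EuclideanSpace ℝ (Fin d),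
      heatKer d s y = (4 * Real.pi * s) ^ (-(d : ℝ) / 2) * rexp (-(4 * s)⁻¹ * ‖y‖ ^ 2) := by
    intro y
    unfold heatKer
    congr 2
    ring
  simp only [he]
  rw [integral_const_mul, h, finrank_euclideanSpace_fin,
    show π / (4 * s)⁻¹ = 4 * π * s by field_simp, ← Real.rpow_add (by positivity)]
  simp [neg_div]

lemma integrable_heatKer (d : ℕ) {s : ℝ} (hs : 0 < s) : Integrable (heatKer d s) := by
  by_contra h
  have h1 := integral_heatKer d hs
  rw [integral_undef h] at h1
  exact zero_ne_one h1

lemma integrable_kerMaj (d : ℕ) {s : ℝ} (hs : 0 < s) : Integrable (kerMaj d s) :=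
  ((integrable_heatKer d (by positivity : 0 < 2 * s)).const_mul _).const_mul _

lemma integral_kerMaj (d : ℕ) {s : ℝ} (hs : 0 < s) :
    ∫ y, kerMaj d s y = 2 ^ ((d : ℝ) / 2) * (√s)⁻¹ := by
  unfold kerMaj
  rw [integral_const_mul, integral_const_mul, integral_heatKer d (by positivity)]
  ring

/-- The linear factor `|y| / (2s)` is absorbed by half of the Gaussian decay, because
`u / 2 ≤ exp (u² / 8)` with `u = |y| / √s`. -/
lemma abs_dKer_le (d : ℕ) {s : ℝ} (hs : 0 < s) (i : Fin d) (y : EuclideanSpace ℝ (Fin d)) :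
    |dKer d s i y| ≤ kerMaj d s y := by
  have hr : 0 < √s := Real.sqrt_pos.2 hs
  have hrs : √s ^ 2 = s := Real.sq_sqrt hs.le
  have hyi : |y i| ≤ ‖y‖ := by simpa using PiLp.norm_apply_le y i
  have hpow : (2 : ℝ) ^ ((d : ℝ) / 2) * (4 * π * (2 * s)) ^ (-(d : ℝ) / 2)
      = (4 * π * s) ^ (-(d : ℝ) / 2) := by
    rw [show 4 * π * (2 * s) = 2 * (4 * π * s) by ring,
      Real.mul_rpow (by positivity) (by positivity), ← mul_assoc, ← Real.rpow_add (by positivity)]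
    simp [neg_div]
  have hu : ‖y‖ / √s / 2 ≤ rexp ((‖y‖ / √s) ^ 2 / 8) := by
    have := Real.add_one_le_exp ((‖y‖ / √s) ^ 2 / 8)
    nlinarith [sq_nonneg (‖y‖ / √s - 2)]
  have hsq : (‖y‖ / √s) ^ 2 = ‖y‖ ^ 2 / s := by rw [div_pow, hrs]
  rw [hsq] at hu
  have hfac : ‖y‖ / (2 * s) ≤ (√s)⁻¹ * rexp (‖y‖ ^ 2 / s / 8) := by
    calc ‖y‖ / (2 * s) = (√s)⁻¹ * (‖y‖ / √s / 2) := by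
          rw [← hrs]; field_simp; simp [hrs]
      _ ≤ _ := by gcongr
  have hexp : rexp (‖y‖ ^ 2 / s / 8) * rexp (-‖y‖ ^ 2 / (4 * s))
      = rexp (-‖y‖ ^ 2 / (4 * (2 * s))) := by
    rw [← Real.exp_add]
    congr 1
    field_simp
    ring
  rw [dKer_eq, abs_mul, abs_neg, abs_div, abs_of_pos (by positivity : 0 < 2 * s),
    abs_of_nonneg (heatKer_nonneg d hs y)]
  calc |y i| / (2 * s) * heatKer d s y
      ≤ ((√s)⁻¹ * rexp (‖y‖ ^ 2 / s / 8)) * heatKer d s y := by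
        have := heatKer_nonneg d hs y
        gcongr
        exact le_trans (by gcongr) hfac
    _ = kerMaj d s y := by
        unfold kerMaj heatKer
        rw [← hexp, ← hpow]
        ring

/-! ### Mass of the majorant in space-time -/

lemma integrableOn_and_integral_inv_sqrt {ν t : ℝ} (hν : 0 < ν) (ht : 0 < t) :
    IntegrableOn (fun s => (√(ν * (t - s)))⁻¹) (Set.Ioo 0 t) ∧
      ∫ s in Set.Ioo 0 t, (√(ν * (t - s)))⁻¹ = 2 * √(t / ν) := by
  have he : Set.EqOn (fun s => (√(ν * (t - s)))⁻¹)
      (fun s => (√ν)⁻¹ * (t - s) ^ (-(1 / 2) : ℝ)) (Set.Ioo 0 t) := by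
    intro s hs
    have h0 : 0 ≤ t - s := by linarith [hs.2]
    simp only
    rw [Real.sqrt_mul hν.le, mul_inv, Real.rpow_neg h0, Real.sqrt_eq_rpow (t - s)]
  have hi : IntervalIntegrable (fun s => (t - s) ^ (-(1 / 2) : ℝ)) volume 0 t := by
    have := (intervalIntegral.intervalIntegrable_rpow' (a := 0) (b := t)
      (r := -(1 / 2)) (by norm_num)).comp_sub_left t
    simpa using this.symm
  constructor
  · refine IntegrableOn.congr_fun ?_ he.symm measurableSet_Ioo
    exact ((((intervalIntegrable_iff_integrableOn_Ioo_of_le ht.le).1 hi)).const_mul _)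
  · rw [setIntegral_congr_fun measurableSet_Ioo he, integral_const_mul,
      ← integral_Ioc_eq_integral_Ioo, ← intervalIntegral.integral_of_le ht.le,
      intervalIntegral.integral_comp_sub_left (fun x => x ^ (-(1 / 2) : ℝ)) t,
      integral_rpow (Or.inl (by norm_num)), Real.sqrt_div ht.le, Real.sqrt_eq_rpow t]
    norm_num
    ring

/-- The total mass of the majorant over space-time is finite and of order `√(t / ν)`. -/
lemma lintegral_kerMaj (d : ℕ) {ν t : ℝ} (hν : 0 < ν) (ht : 0 < t) :
    ∫⁻ q, ENNReal.ofReal (kerMaj d (ν * (t - q.1)) q.2)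
        ∂((volume.restrict (Set.Ioo 0 t)).prod (volume : Measure (EuclideanSpace ℝ (Fin d))))
      = ENNReal.ofReal (2 ^ ((d : ℝ) / 2) * (2 * √(t / ν))) := by
  have hm : Measurable (fun q : ℝ × EuclideanSpace ℝ (Fin d) =>
      kerMaj d (ν * (t - q.1)) q.2) :=
    (measurable_kerMaj d).comp (by fun_prop : Measurable
      (fun q : ℝ × EuclideanSpace ℝ (Fin d) => (ν * (t - q.1), q.2)))
  rw [lintegral_prod _ hm.ennreal_ofReal.aemeasurable]
  obtain ⟨hi, hI⟩ := integrableOn_and_integral_inv_sqrt hν ht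
  rw [← hI, ← integral_const_mul, ofReal_integral_eq_lintegral_ofReal (hi.const_mul _)
    (Filter.Eventually.of_forall fun s => by positivity)]
  refine setLIntegral_congr_fun measurableSet_Ioo fun s hs => ?_
  have h0 : 0 < ν * (t - s) := mul_pos hν (by linarith [hs.2])
  simp only
  rw [← ofReal_integral_eq_lintegral_ofReal (integrable_kerMaj d h0)
    (Filter.Eventually.of_forall fun y => kerMaj_nonneg d h0 y), integral_kerMaj d h0]

/-! ### Pointwise bounds for the Duhamel integral -/

section Duhamel

variable {d : ℕ} {ν t N : ℝ} (i : Fin d) {f : ℝ → EuclideanSpace ℝ (Fin d) → ℝ}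

lemma measurable_integrand (hf : Measurable (Function.uncurry f)) :
    Measurable (Function.uncurry fun (s : ℝ) (y : EuclideanSpace ℝ (Fin d)) =>
      dKer d (ν * (t - s)) i y * f s y) :=
  ((measurable_dKer d i).comp (by fun_prop : Measurable
      (fun q : ℝ × EuclideanSpace ℝ (Fin d) => (ν * (t - q.1), q.2)))).mul hf

lemma norm_integrand_le {s : ℝ} (h0 : 0 < ν * (t - s)) (hb : ∀ y, |f s y| ≤ N)
    (y : EuclideanSpace ℝ (Fin d)) :
    ‖dKer d (ν * (t - s)) i y * f s y‖ ≤ kerMaj d (ν * (t - s)) y * N := by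
  rw [Real.norm_eq_abs, abs_mul]
  exact mul_le_mul (abs_dKer_le d h0 i y) (hb y) (abs_nonneg _) (kerMaj_nonneg d h0 y)

lemma integrable_inner (hf : Measurable (Function.uncurry f)) {s : ℝ} (h0 : 0 < ν * (t - s))
    (hb : ∀ y, |f s y| ≤ N) :
    Integrable (fun y => dKer d (ν * (t - s)) i y * f s y) :=
  ((integrable_kerMaj d h0).mul_const N).mono'
    ((measurable_integrand i hf).comp measurable_prodMk_left).aestronglyMeasurable
    (Filter.Eventually.of_forall (norm_integrand_le i h0 hb))

lemma norm_inner_le {s : ℝ} (h0 : 0 < ν * (t - s)) (hb : ∀ y, |f s y| ≤ N) :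
    ‖∫ y, dKer d (ν * (t - s)) i y * f s y‖
      ≤ 2 ^ ((d : ℝ) / 2) * N * (√(ν * (t - s)))⁻¹ := by
  refine (norm_integral_le_of_norm_le ((integrable_kerMaj d h0).mul_const N)
    (Filter.Eventually.of_forall (norm_integrand_le i h0 hb))).trans_eq ?_
  rw [integral_mul_const, integral_kerMaj d h0]
  ring

lemma integrable_outer (hν : 0 < ν) (ht : 0 < t) (hf : Measurable (Function.uncurry f))
    (hb : ∀ s ∈ Set.Ioo 0 t, ∀ y, |f s y| ≤ N) :
    IntegrableOn (fun s => ∫ y, dKer d (ν * (t - s)) i y * f s y) (Set.Ioo 0 t) := by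
  refine Integrable.mono'
    ((integrableOn_and_integral_inv_sqrt hν ht).1.const_mul (2 ^ ((d : ℝ) / 2) * N))
    (measurable_integrand i hf).stronglyMeasurable.integral_prod_right.aestronglyMeasurable ?_
  filter_upwards [ae_restrict_mem measurableSet_Ioo] with s hs
  exact norm_inner_le i (mul_pos hν (by linarith [hs.2])) (hb s hs)

/-- The uniform estimate for the Duhamel integral of a function bounded by `N`. Applied to `σ` it
gives the sup bound, applied to a difference of translates of `σ` it gives the Hölder bound. -/
lemma abs_duhamel_le (hν : 0 < ν) (ht : 0 < t)
    (hb : ∀ s ∈ Set.Ioo 0 t, ∀ y, |f s y| ≤ N) :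
    |∫ s in Set.Ioo 0 t, ∫ y, dKer d (ν * (t - s)) i y * f s y|
      ≤ 2 ^ ((d : ℝ) / 2) * N * (2 * √(t / ν)) := by
  obtain ⟨hi, hI⟩ := integrableOn_and_integral_inv_sqrt hν ht
  rw [← Real.norm_eq_abs]
  refine (norm_integral_le_of_norm_le (hi.const_mul (2 ^ ((d : ℝ) / 2) * N)) ?_).trans_eq ?_
  · filter_upwards [ae_restrict_mem measurableSet_Ioo] with s hs
    exact norm_inner_le i (mul_pos hν (by linarith [hs.2])) (hb s hs)
  · rw [integral_const_mul, hI]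

/-- Passing to the weighted space-time integral needs no integrability: if an integral below is
undefined, it is zero. -/
lemma enorm_duhamel_le (hν : 0 < ν) (hf : Measurable (Function.uncurry f)) :
    ‖∫ s in Set.Ioo 0 t, ∫ y, dKer d (ν * (t - s)) i y * f s y‖ₑ
      ≤ ∫⁻ q, ENNReal.ofReal (kerMaj d (ν * (t - q.1)) q.2) * ‖f q.1 q.2‖ₑ
        ∂((volume.restrict (Set.Ioo 0 t)).prod (volume : Measure (EuclideanSpace ℝ (Fin d)))) := by
  have hm : Measurable (fun q : ℝ × EuclideanSpace ℝ (Fin d) =>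
      kerMaj d (ν * (t - q.1)) q.2) :=
    (measurable_kerMaj d).comp (by fun_prop : Measurable
      (fun q : ℝ × EuclideanSpace ℝ (Fin d) => (ν * (t - q.1), q.2)))
  have hfe : Measurable (fun q : ℝ × EuclideanSpace ℝ (Fin d) => ‖f q.1 q.2‖ₑ) := hf.enorm
  have hprod : Measurable (fun q : ℝ × EuclideanSpace ℝ (Fin d) =>
      ENNReal.ofReal (kerMaj d (ν * (t - q.1)) q.2) * ‖f q.1 q.2‖ₑ) := hm.ennreal_ofReal.mul hfe
  rw [lintegral_prod _ hprod.aemeasurable]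
  refine (enorm_integral_le_lintegral_enorm _).trans ?_
  refine setLIntegral_mono' measurableSet_Ioo fun s hs => ?_
  refine (enorm_integral_le_lintegral_enorm _).trans ?_
  refine lintegral_mono fun y => ?_
  simp only
  rw [enorm_mul]
  gcongr
  rw [← ofReal_norm, Real.norm_eq_abs]
  exact ENNReal.ofReal_le_ofReal
    (abs_dKer_le d (mul_pos hν (by linarith [hs.2])) i y)

end Duhamel

/-! ### Weighted Minkowski inequality -/

/-- Minkowski's integral inequality for a weight `w` of total mass `m`: a `w`-average of functions
whose `L^p` norms are at most `N` has `L^p` norm at most `m N`. Hölder against the constant `1`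
gives the pointwise bound `(∫ w h)^p ≤ m^{p-1} ∫ w h^p`, which is then integrated by Tonelli. -/
lemma lintegral_rpow_average_le {β E : Type*} [MeasurableSpace β] [MeasurableSpace E]
    (μ : Measure β) [SFinite μ] (ρ : Measure E) [SFinite ρ] {p : ℝ} (hp : 1 < p)
    {w : β → ENNReal} (hw : Measurable w) {h : β → E → ENNReal}
    (hh : Measurable (Function.uncurry h)) {m N : ENNReal} (hm : ∫⁻ b, w b ∂μ = m)
    (hN : ∀ᵐ b ∂μ, ∫⁻ x, h b x ^ p ∂ρ ≤ N ^ p) :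
    ∫⁻ x, (∫⁻ b, w b * h b x ∂μ) ^ p ∂ρ ≤ (m * N) ^ p := by
  have hp0 : 0 < p := by linarith
  have hpq := Real.HolderConjugate.conjExponent hp
  set q := p.conjExponent
  have hhx : ∀ x, Measurable fun b => h b x := fun x => hh.comp measurable_prodMk_right
  have hmass : μ.withDensity w Set.univ = m := by
    rw [withDensity_apply _ MeasurableSet.univ, Measure.restrict_univ, hm]
  have key : ∀ x, (∫⁻ b, w b * h b x ∂μ) ^ p ≤ m ^ (p - 1) * ∫⁻ b, w b * h b x ^ p ∂μ := by
    intro x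
    have h1 := ENNReal.lintegral_mul_le_Lp_mul_Lq (μ.withDensity w) hpq
      (hhx x).aemeasurable (aemeasurable_const (b := (1 : ENNReal)))
    have e1 : ∫⁻ b, ((fun b => h b x) * fun _ : β => (1 : ENNReal) : β → ENNReal) b ∂μ.withDensity w
        = ∫⁻ b, w b * h b x ∂μ := by
      rw [lintegral_withDensity_eq_lintegral_mul _ hw ((hhx x).mul measurable_const)]
      simp
    have e2 : ∫⁻ b, h b x ^ p ∂μ.withDensity w = ∫⁻ b, w b * h b x ^ p ∂μ :=
      lintegral_withDensity_eq_lintegral_mul _ hw ((hhx x).pow_const p)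
    rw [e1, e2] at h1
    simp only [ENNReal.one_rpow, lintegral_one, hmass] at h1
    have h2 := ENNReal.rpow_le_rpow h1 hp0.le
    rw [ENNReal.mul_rpow_of_nonneg _ _ hp0.le, ← ENNReal.rpow_mul, ← ENNReal.rpow_mul,
      one_div_mul_cancel hp0.ne', ENNReal.rpow_one] at h2
    have e3 : 1 / q * p = p - 1 := by
      have := hpq.inv_add_inv_eq_one
      have h4 : q⁻¹ = 1 - p⁻¹ := by linarith
      rw [one_div, h4, sub_mul, inv_mul_cancel₀ hp0.ne', one_mul]
    rw [e3] at h2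
    rwa [mul_comm]
  have hmeas : Measurable (Function.uncurry fun (x : E) (b : β) => w b * h b x ^ p) :=
    (hw.comp measurable_snd).mul ((hh.comp measurable_swap).pow_const p)
  calc ∫⁻ x, (∫⁻ b, w b * h b x ∂μ) ^ p ∂ρ
      ≤ ∫⁻ x, m ^ (p - 1) * ∫⁻ b, w b * h b x ^ p ∂μ ∂ρ := lintegral_mono key
    _ = m ^ (p - 1) * ∫⁻ b, w b * ∫⁻ x, h b x ^ p ∂ρ ∂μ := by
        have hin : Measurable fun x => ∫⁻ b, w b * h b x ^ p ∂μ := hmeas.lintegral_prod_right'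
        rw [lintegral_const_mul _ hin, lintegral_lintegral_swap hmeas.aemeasurable]
        congr 2
        ext b
        exact lintegral_const_mul _ ((hh.comp measurable_prodMk_left).pow_const p)
    _ ≤ m ^ (p - 1) * ∫⁻ b, w b * N ^ p ∂μ := by
        refine mul_le_mul_right (lintegral_mono_ae ?_) _
        filter_upwards [hN] with b hb
        gcongr
    _ = (m * N) ^ p := by
        rw [lintegral_mul_const _ hw, hm, ENNReal.mul_rpow_of_nonneg _ _ hp0.le, ← mul_assoc]
        congr 1
        nth_rewrite 2 [← ENNReal.rpow_one m]
        rw [← ENNReal.rpow_add_of_nonneg _ _ (by linarith) zero_le_one]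
        simp

/-! ### The three estimates -/

/-- Let `0 < α < 1`, `1 < p < ∞`, `ν > 0`, `T > 0`, and let `σ` be jointly measurable with
`sup_{0 ≤ s ≤ T} (‖σ(s)‖_{L^∞} + ‖σ(s)‖_{L^p} + [σ(s)]_α) = M < ∞` (each norm bounded by `M`).
Define `(Uσ)(t)(x) = ∫_0^t ((∂_i g_{ν(t-s)}) * σ(s,·))(x) ds`. Then there is `C` depending only
on `d` such that for all `t ∈ (0,T]`,
`‖(Uσ)(t)‖_{L^∞} + ‖(Uσ)(t)‖_{L^p} + [(Uσ)(t)]_α ≤ C (T/ν)^{1/2} M`. -/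
theorem U_operator_bound (d : ℕ) :
    ∃ C : ℝ, 0 < C ∧
      ∀ (α p ν T M : ℝ) (σ : ℝ → EuclideanSpace ℝ (Fin d) → ℝ) (i : Fin d),
        0 < α → α < 1 → 1 < p → 0 < ν → 0 < T →
        Measurable (Function.uncurry σ) →
        (∀ s ∈ Set.Icc (0 : ℝ) T,
          (∀ x, |σ s x| ≤ M) ∧
          eLpNorm (σ s) (ENNReal.ofReal p) volume ≤ ENNReal.ofReal M ∧
          (∀ x y, |σ s x - σ s y| ≤ M * ‖x - y‖ ^ α)) →
        ∀ t ∈ Set.Ioc (0 : ℝ) T,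
          (∀ x, |∫ s in Set.Ioo (0 : ℝ) t, ∫ y, dKer d (ν * (t - s)) i y * σ s (x - y)| ≤
            C * Real.sqrt (T / ν) * M) ∧
          eLpNorm (fun x => ∫ s in Set.Ioo (0 : ℝ) t, ∫ y, dKer d (ν * (t - s)) i y * σ s (x - y))
              (ENNReal.ofReal p) volume ≤ ENNReal.ofReal (C * Real.sqrt (T / ν) * M) ∧
          (∀ x y : EuclideanSpace ℝ (Fin d),
            |(∫ s in Set.Ioo (0 : ℝ) t, ∫ z, dKer d (ν * (t - s)) i z * σ s (x - z)) -
              (∫ s in Set.Ioo (0 : ℝ) t, ∫ z, dKer d (ν * (t - s)) i z * σ s (y - z))| ≤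
              C * Real.sqrt (T / ν) * M * ‖x - y‖ ^ α) := by
  refine ⟨2 * 2 ^ ((d : ℝ) / 2), by positivity, ?_⟩
  intro α p ν T M σ i hα hα1 hp hν hT hσ H t ht
  have ht0 : 0 < t := ht.1
  have hM : 0 ≤ M := (abs_nonneg _).trans ((H 0 ⟨le_rfl, hT.le⟩).1 0)
  have hIcc : ∀ s ∈ Set.Ioo 0 t, s ∈ Set.Icc 0 T := fun s hs => ⟨hs.1.le, hs.2.le.trans ht.2⟩
  have hroot : √(t / ν) ≤ √(T / ν) := Real.sqrt_le_sqrt (by gcongr; exact ht.2)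
  have hmono : ∀ N : ℝ, 0 ≤ N → 2 ^ ((d : ℝ) / 2) * N * (2 * √(t / ν))
      ≤ 2 * 2 ^ ((d : ℝ) / 2) * √(T / ν) * N := by
    intro N hN
    calc _ ≤ 2 ^ ((d : ℝ) / 2) * N * (2 * √(T / ν)) := by gcongr
      _ = _ := by ring
  have hmeas : ∀ x, Measurable (Function.uncurry fun (s : ℝ) (y : EuclideanSpace ℝ (Fin d)) =>
      σ s (x - y)) := fun x => hσ.comp (by fun_prop : Measurable
      fun q : ℝ × EuclideanSpace ℝ (Fin d) => (q.1, x - q.2))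
  have hbdd : ∀ x, ∀ s ∈ Set.Ioo 0 t, ∀ y, |σ s (x - y)| ≤ M :=
    fun x s hs y => (H s (hIcc s hs)).1 (x - y)
  refine ⟨fun x => ?_, ?_, fun x y => ?_⟩
  · exact (abs_duhamel_le i hν ht0 (hbdd x)).trans (hmono M hM)
  · have hp0 : 0 < p := by linarith
    have hpne : ENNReal.ofReal p ≠ 0 := by simpa using hp0
    have hptop : ENNReal.ofReal p ≠ ⊤ := ENNReal.ofReal_ne_top
    have hpR : (ENNReal.ofReal p).toReal = p := ENNReal.toReal_ofReal hp0.le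
    have hN : ∀ᵐ q ∂((volume.restrict (Set.Ioo 0 t)).prod
        (volume : Measure (EuclideanSpace ℝ (Fin d)))),
        ∫⁻ x, ‖σ q.1 (x - q.2)‖ₑ ^ p ≤ ENNReal.ofReal M ^ p := by
      have hs : ∀ᵐ s ∂(volume.restrict (Set.Ioo 0 t)), s ∈ Set.Ioo 0 t :=
        ae_restrict_mem measurableSet_Ioo
      filter_upwards [Measure.quasiMeasurePreserving_fst.ae hs] with q hq
      have h1 := (H q.1 (hIcc _ hq)).2.1
      rw [eLpNorm_eq_lintegral_rpow_enorm_toReal hpne hptop, hpR, one_div,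
        ENNReal.rpow_inv_le_iff hp0] at h1
      rwa [lintegral_sub_right_eq_self (fun x => ‖σ q.1 x‖ₑ ^ p) q.2]
    have hw : Measurable (fun q : ℝ × EuclideanSpace ℝ (Fin d) =>
        ENNReal.ofReal (kerMaj d (ν * (t - q.1)) q.2)) :=
      ((measurable_kerMaj d).comp (by fun_prop : Measurable
        (fun q : ℝ × EuclideanSpace ℝ (Fin d) => (ν * (t - q.1), q.2)))).ennreal_ofReal
    have hh : Measurable (Function.uncurry fun (q : ℝ × EuclideanSpace ℝ (Fin d))
        (x : EuclideanSpace ℝ (Fin d)) => ‖σ q.1 (x - q.2)‖ₑ) :=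
      (hσ.comp (by fun_prop : Measurable
        fun r : (ℝ × EuclideanSpace ℝ (Fin d)) × EuclideanSpace ℝ (Fin d) =>
          (r.1.1, r.2 - r.1.2))).enorm
    have hmink := lintegral_rpow_average_le _ volume hp hw hh (lintegral_kerMaj d hν ht0) hN
    rw [eLpNorm_eq_lintegral_rpow_enorm_toReal hpne hptop, hpR, one_div,
      ENNReal.rpow_inv_le_iff hp0]
    refine (lintegral_mono fun x => ?_).trans (hmink.trans ?_)
    · exact ENNReal.rpow_le_rpow (enorm_duhamel_le i hν (hmeas x)) hp0.le
    · rw [← ENNReal.ofReal_mul (by positivity)]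
      refine ENNReal.rpow_le_rpow (ENNReal.ofReal_le_ofReal ?_) hp0.le
      refine le_trans (le_of_eq (by ring)) (hmono M hM)
  · have hdiff : (∫ s in Set.Ioo (0 : ℝ) t, ∫ z, dKer d (ν * (t - s)) i z * σ s (x - z)) -
        (∫ s in Set.Ioo (0 : ℝ) t, ∫ z, dKer d (ν * (t - s)) i z * σ s (y - z))
        = ∫ s in Set.Ioo (0 : ℝ) t, ∫ z, dKer d (ν * (t - s)) i z *
          (σ s (x - z) - σ s (y - z)) := by
      rw [← integral_sub (integrable_outer i hν ht0 (hmeas x) (hbdd x))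
        (integrable_outer i hν ht0 (hmeas y) (hbdd y))]
      refine setIntegral_congr_fun measurableSet_Ioo fun s hs => ?_
      have h0 : 0 < ν * (t - s) := mul_pos hν (by linarith [hs.2])
      simp only [mul_sub (dKer _ _ _ _)]
      exact (integral_sub (integrable_inner i (hmeas x) h0 (hbdd x s hs))
        (integrable_inner i (hmeas y) h0 (hbdd y s hs))).symm
    rw [hdiff, mul_assoc]
    refine (abs_duhamel_le i (f := fun s z => σ s (x - z) - σ s (y - z)) hν ht0
      (N := M * ‖x - y‖ ^ α) fun s hs z => ?_).trans
      (hmono _ (by positivity))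
    simpa using (H s (hIcc s hs)).2.2 (x - z) (y - z)
end

section
/- Let ν > 0, T > 0, 0 ≤ s < t ≤ T, L > 0 and C₀ > 0 with L (T/ν)^{1/2} ≤ C₀. Let X_s, X_t : ℝ^d → ℝ^d be measurable maps with sup_{z ∈ ℝ^d} |X_t(z) - X_s(z)| ≤ L (t - s), and define K(x,z) = Δg_{ν(t-s)}(x - X_s(z)) - Δg_{ν(t-s)}(x - X_t(z)). Then there is a constant C depending only on d and C₀ such that: (a) sup_{z ∈ ℝ^d} ∫_{ℝ^d} |K(x,z)| dx ≤ C L (t-s)^{-1/2} ν^{-3/2}; and (b) if moreover X_s is a bijection of ℝ^d preserving Lebesgue measure, then sup_{x ∈ ℝ^d} ∫_{ℝ^d} |K(x,z)| dz ≤ C L (t-s)^{-1/2} ν^{-3/2}. -/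
/-!
The Laplacian of the heat kernel is `(4πτ)^{-d/2} τ⁻¹ φ(|x|²/τ)` with the one-variable profile
`φ(u) = (u/4 - d/2) e^{-u/4}`, whose derivative is `O(e^{-u/8})` on `u ≥ 0`. If `|a - b| ≤ C₀ √τ`,
the mean value theorem between `|a|²/τ` and `|b|²/τ` gives

`|Δg_τ(a) - Δg_τ(b)| ≤ A |a - b| τ^{-3/2} (4πτ)^{-d/2} e^{-|a|²/(32τ)}`

with `A` depending only on `d` and `C₀` (`abs_lapKer_sub_le`). Take `τ = ν(t-s)`, `a = x - Xs z`
and `b = x - Xt z`. The hypothesis `L √(T/ν) ≤ C₀` yields `|a - b| ≤ L(t-s) ≤ C₀ √τ`. The dominating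
Gaussian depends on `Xs` only, so its integral in `x` is computed by translation invariance and its
integral in `z` by pushing Lebesgue measure forward along `Xs`; both equal `8^{d/2}`.
-/

open MeasureTheory Real

/-- The Laplacian `Δg_s` of the heat kernel. -/
noncomputable def lapKer (d : ℕ) (s : ℝ) (x : EuclideanSpace ℝ (Fin d)) : ℝ :=
  ∑ i : Fin d, fderiv ℝ (fun y => fderiv ℝ (heatKer d s) y (EuclideanSpace.single i 1)) x
    (EuclideanSpace.single i 1)

lemma hasFDerivAt_heatKer (d : ℕ) {τ : ℝ} (y : EuclideanSpace ℝ (Fin d)) :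
    HasFDerivAt (heatKer d τ)
      ((heatKer d τ y * (-(1 / (2 * τ)))) • innerSL ℝ y) y := by
  have h1 : HasFDerivAt (fun x : EuclideanSpace ℝ (Fin d) => ‖x‖ ^ 2) (2 • innerSL ℝ y) y :=
    (hasStrictFDerivAt_norm_sq y).hasFDerivAt
  have h2 := (((h1.neg).mul_const (4 * τ)⁻¹).exp).const_mul ((4 * Real.pi * τ) ^ (-(d : ℝ) / 2))
  refine HasFDerivAt.congr_fderiv h2 ?_
  ext v
  simp [heatKer, div_eq_mul_inv]
  ring

lemma lapKer_eq (d : ℕ) {τ : ℝ} (hτ : 0 < τ) (x : EuclideanSpace ℝ (Fin d)) :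
    lapKer d τ x = (4 * Real.pi * τ) ^ (-(d : ℝ) / 2) * τ⁻¹ *
      ((‖x‖ ^ 2 / τ / 4 - d / 2) * Real.exp (-(‖x‖ ^ 2 / τ) / 4)) := by
  have key : ∀ i : Fin d, fderiv ℝ (fun y => fderiv ℝ (heatKer d τ) y (EuclideanSpace.single i 1)) x
      (EuclideanSpace.single i 1) = heatKer d τ x * ((x i) ^ 2 / (4 * τ ^ 2) - 1 / (2 * τ)) := by
    intro i
    have e : (fun y => fderiv ℝ (heatKer d τ) y (EuclideanSpace.single i 1)) =
        fun y => heatKer d τ y * (-(1 / (2 * τ)) * y i) := by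
      funext y
      rw [(hasFDerivAt_heatKer d y).fderiv]
      simp [EuclideanSpace.inner_single_right]
      ring
    have h3 : HasFDerivAt (fun y : EuclideanSpace ℝ (Fin d) => y i)
        (EuclideanSpace.proj i : EuclideanSpace ℝ (Fin d) →L[ℝ] ℝ) x :=
      (EuclideanSpace.proj i : EuclideanSpace ℝ (Fin d) →L[ℝ] ℝ).hasFDerivAt
    have h4 := (hasFDerivAt_heatKer d (τ := τ) x).mul (h3.const_mul (-(1 / (2 * τ))))
    rw [e]
    refine (DFunLike.congr_fun h4.fderiv _).trans ?_
    simp [EuclideanSpace.inner_single_right]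
    field_simp
    ring
  unfold lapKer
  rw [Finset.sum_congr rfl fun i _ => key i, ← Finset.mul_sum, Finset.sum_sub_distrib,
    ← Finset.sum_div, ← EuclideanSpace.real_norm_sq_eq]
  simp only [heatKer, Finset.sum_const, Finset.card_univ, Fintype.card_fin, nsmul_eq_mul]
  rw [show -‖x‖ ^ 2 / (4 * τ) = -(‖x‖ ^ 2 / τ) / 4 by field_simp]
  field_simp

/-- Lipschitz estimate for the radial profile `φ(u) = (u/4 - d/2) e^{-u/4}` on `[m, ∞)`: half of the
exponential decay absorbs the polynomial factor of the derivative. -/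
lemma profile_lipschitz (d : ℕ) {m u v : ℝ} (hm : 0 ≤ m) (hu : m ≤ u) (hv : m ≤ v) :
    |(u / 4 - d / 2) * Real.exp (-u / 4) - (v / 4 - d / 2) * Real.exp (-v / 4)| ≤
      (1 + d) * Real.exp (-m / 8) * |u - v| := by
  have hd : (0 : ℝ) ≤ d := Nat.cast_nonneg d
  have hder : ∀ w ∈ Set.Ici m, HasDerivWithinAt
      (fun w : ℝ => (w / 4 - d / 2) * Real.exp (-w / 4))
      ((1 / 4 - w / 16 + d / 8) * Real.exp (-w / 4)) (Set.Ici m) w := by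
    intro w _
    have h1 : HasDerivAt (fun w : ℝ => w / 4 - d / 2) (1 / 4) w :=
      ((hasDerivAt_id w).div_const 4).sub_const _
    have h2 : HasDerivAt (fun w : ℝ => Real.exp (-w / 4)) (Real.exp (-w / 4) * (-1 / 4)) w :=
      (((hasDerivAt_id w).neg).div_const 4).exp
    refine ((h1.mul h2).congr_deriv ?_).hasDerivWithinAt
    ring
  have hb : ∀ w ∈ Set.Ici m, ‖(1 / 4 - w / 16 + d / 8) * Real.exp (-w / 4)‖ ≤
      (1 + d) * Real.exp (-m / 8) := by
    intro w hw
    have hw : m ≤ w := hw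
    have hw0 : 0 ≤ w := hm.trans hw
    have e1 : Real.exp (-w / 4) = Real.exp (-w / 8) * Real.exp (-w / 8) := by
      rw [← Real.exp_add]; congr 1; ring
    have e2 : Real.exp (w / 8) * Real.exp (-w / 8) = 1 := by
      rw [← Real.exp_add, ← Real.exp_zero]; congr 1; ring
    have h3 : w / 8 + 1 ≤ Real.exp (w / 8) := Real.add_one_le_exp _
    have h4 : |1 / 4 - w / 16 + (d : ℝ) / 8| ≤ (1 + d) * Real.exp (w / 8) := by
      have : (1 + (d : ℝ)) * (w / 8 + 1) ≤ (1 + d) * Real.exp (w / 8) := by gcongr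
      have hdw : 0 ≤ (d : ℝ) * w := by positivity
      rw [abs_le]
      constructor <;> nlinarith
    have h5 : Real.exp (-w / 8) ≤ Real.exp (-m / 8) := Real.exp_le_exp.2 (by linarith)
    rw [Real.norm_eq_abs, abs_mul, abs_of_pos (Real.exp_pos _), e1, ← mul_assoc]
    calc |1 / 4 - w / 16 + (d : ℝ) / 8| * Real.exp (-w / 8) * Real.exp (-w / 8)
        ≤ (1 + d) * Real.exp (w / 8) * Real.exp (-w / 8) * Real.exp (-m / 8) := by gcongr
      _ = (1 + d) * Real.exp (-m / 8) := by rw [mul_assoc (1 + (d : ℝ)), e2, mul_one]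
  exact Convex.norm_image_sub_le_of_norm_hasDerivWithin_le hder hb (convex_Ici m) hv hu

/-- For displacements at most `C₀ √τ`, the increment of `Δg_τ` is dominated by a Gaussian centred at
the first point only. -/
lemma abs_lapKer_sub_le (d : ℕ) {C₀ σ : ℝ} (hC₀ : 0 < C₀) (hσ : 0 < σ)
    (a b : EuclideanSpace ℝ (Fin d)) (hab : ‖a - b‖ ≤ C₀ * σ) :
    |lapKer d (σ ^ 2) a - lapKer d (σ ^ 2) b| ≤
      (1 + d) * Real.exp (C₀ ^ 2 / 8) * (32 + C₀) * (‖a - b‖ / σ ^ 3) *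
        ((4 * Real.pi * σ ^ 2) ^ (-(d : ℝ) / 2) * Real.exp (-(1 / (32 * σ ^ 2)) * ‖a‖ ^ 2)) := by
  have hτ : 0 < σ ^ 2 := by positivity
  have hd : (0 : ℝ) ≤ d := Nat.cast_nonneg d
  rw [lapKer_eq d hτ, lapKer_eq d hτ, ← mul_sub, abs_mul]
  set c := (4 * Real.pi * σ ^ 2) ^ (-(d : ℝ) / 2) with hc
  have hcpos : 0 < c := by positivity
  -- `p`, `q`, `δ` are the norms in units of the diffusion length `σ`.
  obtain ⟨p, hp⟩ : ∃ p, p = ‖a‖ / σ := ⟨_, rfl⟩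
  obtain ⟨q, hq⟩ : ∃ q, q = ‖b‖ / σ := ⟨_, rfl⟩
  obtain ⟨δ, hδ⟩ : ∃ δ, δ = ‖a - b‖ / σ := ⟨_, rfl⟩
  have hp0 : 0 ≤ p := by rw [hp]; positivity
  have hq0 : 0 ≤ q := by rw [hq]; positivity
  have hδ0 : 0 ≤ δ := by rw [hδ]; positivity
  have hδC : δ ≤ C₀ := by rw [hδ, div_le_iff₀ hσ]; exact hab
  have hpq : |p - q| ≤ δ := by
    rw [hp, hq, hδ, ← sub_div, abs_div, abs_of_pos hσ]
    gcongr
    exact abs_norm_sub_norm_le a b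
  rw [abs_le] at hpq
  have ep : ‖a‖ ^ 2 / σ ^ 2 = p ^ 2 := by rw [hp, div_pow]
  have eq₂ : ‖b‖ ^ 2 / σ ^ 2 = q ^ 2 := by rw [hq, div_pow]
  have ee : -(1 / (32 * σ ^ 2)) * ‖a‖ ^ 2 = -p ^ 2 / 32 := by rw [hp]; field_simp
  have ed : ‖a - b‖ / σ ^ 3 = δ * (σ ^ 2)⁻¹ := by rw [hδ]; field_simp
  rw [ep, eq₂, ee, ed, abs_of_pos (by positivity)]
  have hL := profile_lipschitz d (m := min (p ^ 2) (q ^ 2)) (le_min (sq_nonneg p) (sq_nonneg q))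
    (min_le_left _ _) (min_le_right _ _)
  have hmin : p ^ 2 / 2 - C₀ ^ 2 ≤ min (p ^ 2) (q ^ 2) := by
    apply le_min
    · nlinarith
    · nlinarith [sq_nonneg (p - 2 * q), sq_nonneg (p - q)]
  have hexp : Real.exp (-min (p ^ 2) (q ^ 2) / 8) ≤
      Real.exp (C₀ ^ 2 / 8) * Real.exp (-p ^ 2 / 16) := by
    rw [← Real.exp_add]
    exact Real.exp_le_exp.2 (by linarith)
  have hdiff : |p ^ 2 - q ^ 2| ≤ δ * (2 * p + C₀) := by
    rw [sq_sub_sq, abs_mul, mul_comm, abs_of_nonneg (by positivity : 0 ≤ p + q)]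
    exact mul_le_mul (abs_le.2 hpq) (by linarith) (by positivity) hδ0
  have hpoly : 2 * p + C₀ ≤ (32 + C₀) * Real.exp (p ^ 2 / 32) := by
    have h : p ^ 2 / 32 + 1 ≤ Real.exp (p ^ 2 / 32) := Real.add_one_le_exp _
    have h₂ : (32 + C₀) * (p ^ 2 / 32 + 1) ≤ (32 + C₀) * Real.exp (p ^ 2 / 32) := by gcongr
    have : 0 ≤ C₀ * p ^ 2 := by positivity
    nlinarith [sq_nonneg (p - 1)]
  have hcomb : Real.exp (p ^ 2 / 32) * Real.exp (-p ^ 2 / 16) = Real.exp (-p ^ 2 / 32) := by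
    rw [← Real.exp_add]; congr 1; ring
  calc c * (σ ^ 2)⁻¹ * _ ≤ c * (σ ^ 2)⁻¹ *
        ((1 + d) * (Real.exp (C₀ ^ 2 / 8) * Real.exp (-p ^ 2 / 16)) *
          (δ * ((32 + C₀) * Real.exp (p ^ 2 / 32)))) := by
        gcongr
        refine hL.trans ?_
        gcongr
        exact hdiff.trans (by gcongr)
    _ = _ := by rw [← hcomb]; ring

/-- The dominating Gaussian of `abs_lapKer_sub_le` has mass `8^{d/2}`, whatever the scale. -/
lemma integral_dominating_gaussian (d : ℕ) {σ : ℝ} (hσ : 0 < σ) :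
    (∫ y : EuclideanSpace ℝ (Fin d),
      (4 * Real.pi * σ ^ 2) ^ (-(d : ℝ) / 2) * Real.exp (-(1 / (32 * σ ^ 2)) * ‖y‖ ^ 2)) =
      (8 : ℝ) ^ ((d : ℝ) / 2) := by
  rw [integral_const_mul, GaussianFourier.integral_rexp_neg_mul_sq_norm (by positivity)]
  rw [finrank_euclideanSpace_fin, neg_div, Real.rpow_neg (by positivity), ← div_eq_inv_mul,
    ← Real.div_rpow (by positivity) (by positivity)]
  congr 1
  field_simp
  norm_num

lemma integrable_dominating_gaussian (d : ℕ) {σ : ℝ} (hσ : 0 < σ) :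
    Integrable fun y : EuclideanSpace ℝ (Fin d) =>
      (4 * Real.pi * σ ^ 2) ^ (-(d : ℝ) / 2) * Real.exp (-(1 / (32 * σ ^ 2)) * ‖y‖ ^ 2) := by
  -- A function with nonzero Bochner integral is integrable.
  by_contra h
  have h1 := integral_dominating_gaussian d hσ
  rw [integral_undef h] at h1
  have : (0 : ℝ) < (8 : ℝ) ^ ((d : ℝ) / 2) := by positivity
  linarith

/-- Let `ν > 0`, `T > 0`, `0 ≤ s < t ≤ T`, `L > 0`, `C₀ > 0` with `L (T/ν)^{1/2} ≤ C₀`.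
Let `Xs, Xt : ℝ^d → ℝ^d` be measurable with `sup_z |Xt(z) - Xs(z)| ≤ L (t-s)` and set
`K(x,z) = Δg_{ν(t-s)}(x - Xs(z)) - Δg_{ν(t-s)}(x - Xt(z))`. Then there is `C` depending
only on `d` and `C₀` such that (a) `sup_z ∫ |K(x,z)| dx ≤ C L (t-s)^{-1/2} ν^{-3/2}`, and
(b) if `Xs` is a measure-preserving bijection then also
`sup_x ∫ |K(x,z)| dz ≤ C L (t-s)^{-1/2} ν^{-3/2}`. -/
theorem kernel_K_L1_bounds (d : ℕ) (C₀ : ℝ) (hC₀ : 0 < C₀) :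
    ∃ C : ℝ, 0 < C ∧
      ∀ (ν T s t L : ℝ)
        (Xs Xt : EuclideanSpace ℝ (Fin d) → EuclideanSpace ℝ (Fin d)),
        0 < ν → 0 < T → 0 ≤ s → s < t → t ≤ T → 0 < L → L * Real.sqrt (T / ν) ≤ C₀ →
        Measurable Xs → Measurable Xt →
        (∀ z, ‖Xt z - Xs z‖ ≤ L * (t - s)) →
        ((∀ z, (∫ x, |lapKer d (ν * (t - s)) (x - Xs z) - lapKer d (ν * (t - s)) (x - Xt z)|) ≤
            C * L * (t - s) ^ (-(1 : ℝ) / 2) * ν ^ (-(3 : ℝ) / 2)) ∧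
         (Function.Bijective Xs → MeasurePreserving Xs volume volume →
          ∀ x, (∫ z, |lapKer d (ν * (t - s)) (x - Xs z) - lapKer d (ν * (t - s)) (x - Xt z)|) ≤
            C * L * (t - s) ^ (-(1 : ℝ) / 2) * ν ^ (-(3 : ℝ) / 2))) := by
  set A : ℝ := (1 + d) * Real.exp (C₀ ^ 2 / 8) * (32 + C₀) with hA
  have hApos : 0 < A := by positivity
  refine ⟨A * (8 : ℝ) ^ ((d : ℝ) / 2), by positivity, ?_⟩
  intro ν T s t L Xs Xt hν hT hs hst htT hL hLC _ _ hX
  have hr : 0 < t - s := by linarith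
  obtain ⟨σ, hσdef⟩ : ∃ σ, σ = Real.sqrt (ν * (t - s)) := ⟨_, rfl⟩
  have hσ : 0 < σ := by rw [hσdef]; exact Real.sqrt_pos.2 (by positivity)
  have hσ2 : ν * (t - s) = σ ^ 2 := by rw [hσdef, Real.sq_sqrt (by positivity)]
  have hLσ : L * (t - s) ≤ C₀ * σ := by
    have h1 : t - s = Real.sqrt ((t - s) / ν) * σ := by
      rw [hσdef, ← Real.sqrt_mul (by positivity),
        show (t - s) / ν * (ν * (t - s)) = (t - s) ^ 2 by field_simp, Real.sqrt_sq hr.le]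
    have h2 : Real.sqrt ((t - s) / ν) ≤ Real.sqrt (T / ν) := by
      apply Real.sqrt_le_sqrt
      gcongr
      linarith
    calc L * (t - s) = L * Real.sqrt ((t - s) / ν) * σ := by rw [mul_assoc, ← h1]
      _ ≤ L * Real.sqrt (T / ν) * σ := by gcongr
      _ ≤ C₀ * σ := by gcongr
  have hscale : L * (t - s) / σ ^ 3 = L * (t - s) ^ (-(1 : ℝ) / 2) * ν ^ (-(3 : ℝ) / 2) := by
    have h3 : σ ^ 3 = ν ^ ((3 : ℝ) / 2) * (t - s) ^ ((3 : ℝ) / 2) := by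
      rw [hσdef, Real.sqrt_eq_rpow, ← Real.rpow_natCast, ← Real.rpow_mul (by positivity),
        ← Real.mul_rpow hν.le hr.le]
      norm_num
    have h4 : (t - s) ^ (-(1 : ℝ) / 2) * (t - s) ^ ((3 : ℝ) / 2) = t - s := by
      rw [← Real.rpow_add hr]; norm_num
    have h5 : ν ^ (-(3 : ℝ) / 2) * ν ^ ((3 : ℝ) / 2) = 1 := by
      rw [← Real.rpow_add hν]; norm_num
    rw [div_eq_iff (by positivity), h3]
    calc L * (t - s) = L * ((t - s) ^ (-(1 : ℝ) / 2) * (t - s) ^ ((3 : ℝ) / 2)) *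
          (ν ^ (-(3 : ℝ) / 2) * ν ^ ((3 : ℝ) / 2)) := by rw [h4, h5, mul_one]
      _ = _ := by ring
  obtain ⟨G, hG⟩ : ∃ G : EuclideanSpace ℝ (Fin d) → ℝ, G = fun y =>
      (4 * Real.pi * σ ^ 2) ^ (-(d : ℝ) / 2) * Real.exp (-(1 / (32 * σ ^ 2)) * ‖y‖ ^ 2) :=
    ⟨_, rfl⟩
  have hGint : Integrable G := by rw [hG]; exact integrable_dominating_gaussian d hσ
  have hGval : ∫ y, G y = (8 : ℝ) ^ ((d : ℝ) / 2) := by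
    rw [hG]; exact integral_dominating_gaussian d hσ
  have hpt : ∀ x z, |lapKer d (ν * (t - s)) (x - Xs z) - lapKer d (ν * (t - s)) (x - Xt z)| ≤
      A * (L * (t - s) / σ ^ 3) * G (x - Xs z) := by
    intro x z
    have hn : ‖(x - Xs z) - (x - Xt z)‖ ≤ L * (t - s) := by
      rw [sub_sub_sub_cancel_left]; exact hX z
    have hG0 : 0 ≤ G (x - Xs z) := by rw [hG]; positivity
    have h6 := abs_lapKer_sub_le d hC₀ hσ _ _ (hn.trans hLσ)
    have hGe := congrFun hG (x - Xs z)
    rw [← hGe, ← hA] at h6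
    rw [hσ2]
    exact h6.trans (by gcongr)
  have hconst : A * (L * (t - s) / σ ^ 3) * (8 : ℝ) ^ ((d : ℝ) / 2) =
      A * (8 : ℝ) ^ ((d : ℝ) / 2) * L * (t - s) ^ (-(1 : ℝ) / 2) * ν ^ (-(3 : ℝ) / 2) := by
    rw [hscale]; ring
  rw [← hconst, ← hGval]
  refine ⟨fun z => ?_, fun _ hmp x => ?_⟩
  · calc _ ≤ ∫ x, A * (L * (t - s) / σ ^ 3) * G (x - Xs z) :=
          integral_mono_of_nonneg (Filter.Eventually.of_forall fun _ => abs_nonneg _)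
            ((hGint.comp_sub_right (Xs z)).const_mul _)
            (Filter.Eventually.of_forall fun x => hpt x z)
      _ = _ := by rw [integral_const_mul, integral_sub_right_eq_self]
  · have hGx : Integrable fun y => G (x - y) := hGint.comp_sub_left x
    calc _ ≤ ∫ z, A * (L * (t - s) / σ ^ 3) * G (x - Xs z) :=
          integral_mono_of_nonneg (Filter.Eventually.of_forall fun _ => abs_nonneg _)
            ((hmp.integrable_comp_of_integrable hGx).const_mul _)
            (Filter.Eventually.of_forall fun z => hpt x z)
      _ = _ := by
        have hmap : ∫ y, G (x - y) = ∫ z, G (x - Xs z) := by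
          conv_lhs => rw [← hmp.map_eq]
          refine integral_map hmp.aemeasurable ?_
          rw [hmp.map_eq]
          exact hGx.aestronglyMeasurable
        rw [integral_const_mul, ← hmap, integral_sub_left_eq_self]
end

section
/- Let 0 < α < 1, ν > 0, T > 0, t ∈ (0,T] and W ≥ 0. Let w : (0,t) × ℝ^d → ℝ be jointly measurable with ‖w(s,·)‖_{L^∞} ≤ W (t - s)^α for every s ∈ (0,t). Then there is a constant C depending only on d, α, ν and T such that for every h ∈ ℝ^d with h ≠ 0, the finite difference of F(x) = ∫_0^t ((Δg_{ν(t-s)}) * w(s,·))(x) ds satisfies ‖F(· + h) - F‖_{L^∞} ≤ C W |h|^α. -/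
/-!
The proof rests on the `L¹` Hölder estimate
`‖Δg_s(· + h) - Δg_s‖₁ ≤ M |h|^α s^{-1-α/2}` (`exists_integral_lapKer_sub_le`).

By the scaling `Δg_s(y) = s^{-1} s^{-d/2} Δg_1(y/√s)` it reduces to the case `s = 1`, that is to
`‖Φ(· + k) - Φ‖₁ ≤ M' |k|^α` for the radial function `Φ = Δg_1`. This holds pointwise with a Gaussian
weight: small shifts are handled by the mean value inequality for the radial profile, large shifts
by the triangle inequality.

Translating the convolution variable puts the shift on the kernel, so at time `s` the difference of
the two convolutions is at most
`W (t-s)^α · M |h|^α (ν(t-s))^{-1-α/2} = W M ν^{-1-α/2} |h|^α (t-s)^{α/2-1}`.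
Since `α > 0`, the right-hand side is integrable on `(0, t)`, with integral at most a constant times
`T^{α/2} / (α/2)`. The two time integrals may be subtracted because each convolution is bounded by a
multiple of `(t-s)^{α-1}`, which is integrable (`integrableOn_conv`).
-/

open MeasureTheory Real

/-- The radial profile of the Laplacian of the Gaussian: up to the factor `(4π)^{-d/2}`, the function
`Δg_1` at a point of norm `r`. -/
noncomputable def lapProfile (d : ℕ) (r : ℝ) : ℝ :=
  (r ^ 2 / 4 - d / 2) * Real.exp (-r ^ 2 / 4)

/-! ### Explicit form of the Laplacian of the heat kernel -/

lemma fderiv_heatKer (d : ℕ) {s : ℝ} (hs : 0 < s) (y v : EuclideanSpace ℝ (Fin d)) :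
    fderiv ℝ (heatKer d s) y v = heatKer d s y * (-(inner ℝ y v) / (2 * s)) := by
  have h1 : HasFDerivAt (fun y : EuclideanSpace ℝ (Fin d) => -‖y‖ ^ 2 / (4 * s))
      ((-(1 / (4 * s))) • (2 • innerSL ℝ y)) y := by
    have := ((hasStrictFDerivAt_norm_sq y).hasFDerivAt).const_mul (-(1 / (4 * s)))
    refine this.congr_of_eventuallyEq (Filter.Eventually.of_forall fun z => ?_)
    simp only
    ring
  have h2 := (h1.exp).const_mul ((4 * Real.pi * s) ^ (-(d : ℝ) / 2))
  have h3 : HasFDerivAt (heatKer d s) _ y := h2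
  rw [h3.fderiv]
  simp [heatKer]
  field_simp
  ring

lemma differentiable_heatKer (d : ℕ) (s : ℝ) : Differentiable ℝ (heatKer d s) := by
  unfold heatKer
  have : Differentiable ℝ (fun y : EuclideanSpace ℝ (Fin d) => ‖y‖ ^ 2) :=
    fun y => (hasStrictFDerivAt_norm_sq y).hasFDerivAt.differentiableAt
  simp only [div_eq_mul_inv]
  fun_prop

lemma lapKer_eq_s18 (d : ℕ) {s : ℝ} (hs : 0 < s) (y : EuclideanSpace ℝ (Fin d)) :
    lapKer d s y = heatKer d s y * (‖y‖ ^ 2 / (4 * s ^ 2) - d / (2 * s)) := by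
  have key : ∀ i : Fin d, fderiv ℝ (fun y => fderiv ℝ (heatKer d s) y
      (EuclideanSpace.single i 1)) y (EuclideanSpace.single i 1) =
      heatKer d s y * ((y i) ^ 2 / (4 * s ^ 2) - 1 / (2 * s)) := by
    intro i
    have e : (fun y => fderiv ℝ (heatKer d s) y (EuclideanSpace.single i 1)) =
        fun y => heatKer d s y * (-(1 / (2 * s)) * (EuclideanSpace.proj (𝕜 := ℝ) i y)) := by
      funext z
      rw [fderiv_heatKer d hs]
      simp [EuclideanSpace.inner_single_right]
      ring
    have h1 := (differentiable_heatKer d s y).hasFDerivAt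
    have h2 : HasFDerivAt (fun y : EuclideanSpace ℝ (Fin d) =>
        -(1 / (2 * s)) * (EuclideanSpace.proj (𝕜 := ℝ) i y))
        (-(1 / (2 * s)) • (EuclideanSpace.proj (𝕜 := ℝ) i : EuclideanSpace ℝ (Fin d) →L[ℝ] ℝ)) y :=
      (EuclideanSpace.proj (𝕜 := ℝ) i : EuclideanSpace ℝ (Fin d) →L[ℝ] ℝ).hasFDerivAt.const_mul _
    have h3 : HasFDerivAt (fun y => heatKer d s y *
        (-(1 / (2 * s)) * (EuclideanSpace.proj (𝕜 := ℝ) i y))) _ y := h1.mul h2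
    rw [e, h3.fderiv]
    simp [fderiv_heatKer d hs, EuclideanSpace.inner_single_right]
    field_simp
    ring
  unfold lapKer
  rw [Finset.sum_congr rfl fun i _ => key i, ← Finset.mul_sum, Finset.sum_sub_distrib,
    ← Finset.sum_div, ← EuclideanSpace.real_norm_sq_eq]
  simp
  left
  ring

/-- Parabolic self-similarity: `Δg_s` is a rescaling of the fixed radial function `Δg_1`. -/
lemma lapKer_eq_profile (d : ℕ) {s : ℝ} (hs : 0 < s) (y : EuclideanSpace ℝ (Fin d)) :
    lapKer d s y = (4 * Real.pi) ^ (-(d : ℝ) / 2) * s⁻¹ * (√s ^ d)⁻¹ *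
      lapProfile d ‖(√s)⁻¹ • y‖ := by
  have h1 : s ^ (-(d : ℝ) / 2) = (√s ^ d)⁻¹ := by
    rw [Real.sqrt_eq_rpow, ← Real.rpow_natCast, ← Real.rpow_mul hs.le, ← Real.rpow_neg hs.le]
    congr 1
    ring
  have h2 : ‖(√s)⁻¹ • y‖ ^ 2 = ‖y‖ ^ 2 / s := by
    rw [norm_smul, mul_pow, norm_inv, inv_pow, Real.norm_eq_abs, sq_abs, Real.sq_sqrt hs.le]
    ring
  rw [lapKer_eq_s18 d hs, heatKer, lapProfile, h2, Real.mul_rpow (by positivity) hs.le, h1]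
  have h3 : -‖y‖ ^ 2 / (4 * s) = -(‖y‖ ^ 2 / s) / 4 := by field_simp
  rw [h3]
  field_simp

/-! ### Pointwise bounds on the profile -/

lemma hasDerivAt_lapProfile (d : ℕ) (r : ℝ) : HasDerivAt (lapProfile d)
    ((r / 2 * (1 + d / 2) - r ^ 3 / 8) * Real.exp (-r ^ 2 / 4)) r := by
  have h1 : HasDerivAt (fun r : ℝ => r ^ 2) (2 * r) r := by simpa using hasDerivAt_pow 2 r
  have h := ((h1.div_const 4).sub_const ((d : ℝ) / 2)).mul ((h1.neg.div_const 4).exp)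
  refine h.congr_deriv ?_
  simp
  ring

/-- Half of the Gaussian decay absorbs the polynomial factors of the profile and its derivative. -/
lemma poly_mul_exp_le (d : ℕ) (r : ℝ) :
    (1 + d) * (1 + r ^ 2) ^ 2 * Real.exp (-r ^ 2 / 4) ≤
      128 * (1 + d) * Real.exp (-r ^ 2 / 8) := by
  have h := Real.quadratic_le_exp_of_nonneg (x := r ^ 2 / 8) (by positivity)
  have e : Real.exp (-r ^ 2 / 8) = Real.exp (r ^ 2 / 8) * Real.exp (-r ^ 2 / 4) := by
    rw [← Real.exp_add]; congr 1; ring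
  rw [e]
  have : (1 + r ^ 2) ^ 2 ≤ 128 * Real.exp (r ^ 2 / 8) := by nlinarith [sq_nonneg r]
  calc _ = ((1 + d) * Real.exp (-r ^ 2 / 4)) * (1 + r ^ 2) ^ 2 := by ring
    _ ≤ ((1 + d) * Real.exp (-r ^ 2 / 4)) * (128 * Real.exp (r ^ 2 / 8)) := by gcongr
    _ = _ := by ring

lemma abs_lapProfile_le (d : ℕ) (r : ℝ) :
    |lapProfile d r| ≤ 128 * (1 + d) * Real.exp (-r ^ 2 / 8) := by
  refine le_trans ?_ (poly_mul_exp_le d r)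
  rw [lapProfile, abs_mul, Real.abs_exp]
  gcongr
  have hd : (0 : ℝ) ≤ d := by positivity
  have : 0 ≤ (d : ℝ) * r ^ 2 := by positivity
  have : 0 ≤ (d : ℝ) * r ^ 4 := by positivity
  rw [abs_le]
  constructor <;> nlinarith [sq_nonneg r, sq_nonneg (r ^ 2)]

lemma abs_deriv_lapProfile_le (d : ℕ) (r : ℝ) :
    |(r / 2 * (1 + d / 2) - r ^ 3 / 8) * Real.exp (-r ^ 2 / 4)| ≤
      128 * (1 + d) * Real.exp (-r ^ 2 / 8) := by
  refine le_trans ?_ (poly_mul_exp_le d r)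
  rw [abs_mul, Real.abs_exp]
  gcongr
  have hd : (0 : ℝ) ≤ d := by positivity
  have hr : |r| ≤ 1 + r ^ 2 := by
    rw [abs_le]; constructor <;> nlinarith [sq_nonneg (r + 1), sq_nonneg (r - 1)]
  have e : r / 2 * (1 + d / 2) - r ^ 3 / 8 = r * ((1 + d / 2) / 2 - r ^ 2 / 8) := by ring
  have h2 : |(1 + (d : ℝ) / 2) / 2 - r ^ 2 / 8| ≤ (1 + d) * (1 + r ^ 2) := by
    have : 0 ≤ (d : ℝ) * r ^ 2 := by positivity
    rw [abs_le]
    constructor <;> nlinarith [sq_nonneg r]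
  rw [e, abs_mul]
  calc _ ≤ (1 + r ^ 2) * ((1 + d) * (1 + r ^ 2)) := by gcongr
    _ = _ := by ring

/-- Mean value inequality for the profile. Moving the argument by at most `1` costs only the constant
`exp (1/8)` and half of the rate in the Gaussian weight, because `b² ≤ 2r² + 2(r - b)²`. -/
lemma abs_lapProfile_sub_le_of_le_one (d : ℕ) {a b : ℝ} (hab : |a - b| ≤ 1) :
    |lapProfile d a - lapProfile d b| ≤
      128 * (1 + d) * Real.exp (1 / 8) * |a - b| * Real.exp (-b ^ 2 / 16) := by
  have := Convex.norm_image_sub_le_of_norm_hasDerivWithin_le (f := lapProfile d)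
    (f' := fun r => (r / 2 * (1 + d / 2) - r ^ 3 / 8) * Real.exp (-r ^ 2 / 4))
    (C := 128 * (1 + d) * Real.exp (1 / 8) * Real.exp (-b ^ 2 / 16))
    (s := Set.uIcc b a) (x := b) (y := a)
    (fun r _ => (hasDerivAt_lapProfile d r).hasDerivWithinAt) ?_ (convex_uIcc b a)
    Set.left_mem_uIcc Set.right_mem_uIcc
  · rw [Real.norm_eq_abs, Real.norm_eq_abs] at this
    linarith
  · intro r hr
    refine (abs_deriv_lapProfile_le d r).trans ?_
    rw [mul_assoc _ (Real.exp _) (Real.exp _), ← Real.exp_add]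
    gcongr
    have h1 : |r - b| ≤ 1 := (Set.abs_sub_left_of_mem_uIcc hr).trans hab
    have h2 : (r - b) ^ 2 ≤ 1 := by rw [← sq_abs]; nlinarith [abs_nonneg (r - b)]
    nlinarith [sq_nonneg (2 * r - b)]

/-- Pointwise `α`-Hölder bound with an integrable Gaussian weight. For `‖k‖ ≤ 1` it comes from the
Lipschitz bound and `‖k‖ ≤ ‖k‖ ^ α`; for `‖k‖ ≥ 1` from the size of the profile and
`1 ≤ ‖k‖ ^ α`. -/
lemma abs_lapProfile_norm_sub_le (d : ℕ) {α : ℝ} (hα : 0 < α) (hα1 : α < 1)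
    {E : Type*} [SeminormedAddCommGroup E] (z k : E) :
    |lapProfile d ‖z + k‖ - lapProfile d ‖z‖| ≤ 128 * (1 + d) * Real.exp (1 / 8) * ‖k‖ ^ α *
      (Real.exp (-‖z + k‖ ^ 2 / 16) + Real.exp (-‖z‖ ^ 2 / 16)) := by
  have hn : |‖z + k‖ - ‖z‖| ≤ ‖k‖ := by simpa using abs_norm_sub_norm_le (z + k) z
  rcases le_total ‖k‖ 1 with hk | hk
  · refine (abs_lapProfile_sub_le_of_le_one d (hn.trans hk)).trans ?_
    have hp : ‖k‖ ≤ ‖k‖ ^ α := Real.self_le_rpow_of_le_one (norm_nonneg _) hk hα1.le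
    gcongr
    · exact hn.trans hp
    · exact le_add_of_nonneg_left (Real.exp_nonneg _)
  · have hp : 1 ≤ ‖k‖ ^ α := Real.one_le_rpow hk hα.le
    have he : 1 ≤ Real.exp (1 / 8) := Real.one_le_exp (by norm_num)
    have hb : ∀ r : ℝ, |lapProfile d r| ≤ 128 * (1 + d) * Real.exp (-r ^ 2 / 16) := fun r =>
      (abs_lapProfile_le d r).trans (by gcongr _ * Real.exp ?_; nlinarith [sq_nonneg r])
    calc _ ≤ |lapProfile d ‖z + k‖| + |lapProfile d ‖z‖| := abs_sub _ _
      _ ≤ 128 * (1 + d) * 1 * 1 * (Real.exp (-‖z + k‖ ^ 2 / 16) + Real.exp (-‖z‖ ^ 2 / 16)) := by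
        linarith [hb ‖z + k‖, hb ‖z‖]
      _ ≤ _ := by gcongr

/-! ### `L¹` bounds -/

lemma integrable_exp_norm_sq (d : ℕ) :
    Integrable fun z : EuclideanSpace ℝ (Fin d) => Real.exp (-‖z‖ ^ 2 / 16) := by
  have h := (GaussianFourier.integrable_cexp_neg_mul_sq_norm_add (b := (1 / 16 : ℂ))
    (by norm_num) 0 (0 : EuclideanSpace ℝ (Fin d))).norm
  refine h.congr (Filter.Eventually.of_forall fun z => ?_)
  simp only [Complex.norm_exp]
  congr 1
  have : (-(1 / 16 : ℂ) * (‖z‖ : ℂ) ^ 2 + 0 * (inner ℝ (0 : EuclideanSpace ℝ (Fin d)) z : ℂ)) =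
    ((-‖z‖ ^ 2 / 16 : ℝ) : ℂ) := by push_cast; ring
  rw [this, Complex.ofReal_re]

lemma continuous_lapProfile (d : ℕ) : Continuous (lapProfile d) := by
  unfold lapProfile; fun_prop

lemma integrable_lapProfile_norm (d : ℕ) :
    Integrable fun z : EuclideanSpace ℝ (Fin d) => lapProfile d ‖z‖ := by
  refine ((integrable_exp_norm_sq d).const_mul (128 * (1 + d : ℝ))).mono'
    ((continuous_lapProfile d).comp continuous_norm).aestronglyMeasurable
    (Filter.Eventually.of_forall fun z => ?_)
  rw [Real.norm_eq_abs]
  refine (abs_lapProfile_le d ‖z‖).trans ?_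
  gcongr _ * Real.exp ?_
  nlinarith [sq_nonneg ‖z‖]

/-- `L¹` Hölder modulus of continuity of `Δg_1`. -/
lemma exists_integral_lapProfile_sub_le (d : ℕ) {α : ℝ} (hα : 0 < α) (hα1 : α < 1) :
    ∃ M : ℝ, 0 ≤ M ∧ ∀ k : EuclideanSpace ℝ (Fin d),
      ∫ z : EuclideanSpace ℝ (Fin d), |lapProfile d ‖z + k‖ - lapProfile d ‖z‖| ≤ M * ‖k‖ ^ α := by
  refine ⟨256 * (1 + d) * Real.exp (1 / 8) *
    ∫ z : EuclideanSpace ℝ (Fin d), Real.exp (-‖z‖ ^ 2 / 16),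
    mul_nonneg (by positivity) (integral_nonneg fun _ => (Real.exp_pos _).le), fun k => ?_⟩
  have hg := integrable_exp_norm_sq d
  have hgk := hg.comp_add_right k
  have hp := integrable_lapProfile_norm d
  calc _ ≤ ∫ z : EuclideanSpace ℝ (Fin d), 128 * (1 + d) * Real.exp (1 / 8) * ‖k‖ ^ α *
        (Real.exp (-‖z + k‖ ^ 2 / 16) + Real.exp (-‖z‖ ^ 2 / 16)) :=
        integral_mono ((hp.comp_add_right k).sub hp).abs ((hgk.add hg).const_mul _)
          fun z => abs_lapProfile_norm_sub_le d hα hα1 z k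
    _ = _ := by
        rw [integral_const_mul, integral_add hgk hg,
          integral_add_right_eq_self
            (fun z : EuclideanSpace ℝ (Fin d) => Real.exp (-‖z‖ ^ 2 / 16)) k]
        ring

lemma integrable_lapKer (d : ℕ) {s : ℝ} (hs : 0 < s) : Integrable (lapKer d s) := by
  have : lapKer d s = fun y => (4 * Real.pi) ^ (-(d : ℝ) / 2) * s⁻¹ * (√s ^ d)⁻¹ *
      lapProfile d ‖(√s)⁻¹ • y‖ := funext (lapKer_eq_profile d hs)
  rw [this]
  exact ((integrable_lapProfile_norm d).comp_smul (by positivity)).const_mul _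

lemma integral_abs_lapKer (d : ℕ) {s : ℝ} (hs : 0 < s) :
    ∫ y, |lapKer d s y| = (4 * Real.pi) ^ (-(d : ℝ) / 2) * s⁻¹ *
      ∫ z : EuclideanSpace ℝ (Fin d), |lapProfile d ‖z‖| := by
  have hsq : 0 < √s := Real.sqrt_pos.2 hs
  simp_rw [lapKer_eq_profile d hs, abs_mul]
  rw [integral_const_mul, Measure.integral_comp_smul volume
    (fun z : EuclideanSpace ℝ (Fin d) => |lapProfile d ‖z‖|) (√s)⁻¹, finrank_euclideanSpace_fin,
    abs_of_nonneg (a := (4 * Real.pi) ^ (-(d : ℝ) / 2)) (by positivity),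
    abs_of_pos (a := s⁻¹) (by positivity), abs_of_pos (a := (√s ^ d)⁻¹) (by positivity),
    abs_of_pos (by positivity), smul_eq_mul, inv_pow, inv_inv]
  field_simp

lemma integral_abs_lapKer_sub (d : ℕ) {s : ℝ} (hs : 0 < s) (h : EuclideanSpace ℝ (Fin d)) :
    ∫ y, |lapKer d s (y + h) - lapKer d s y| = (4 * Real.pi) ^ (-(d : ℝ) / 2) * s⁻¹ *
      ∫ z : EuclideanSpace ℝ (Fin d), |lapProfile d ‖z + (√s)⁻¹ • h‖ - lapProfile d ‖z‖| := by
  have hsq : 0 < √s := Real.sqrt_pos.2 hs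
  simp_rw [lapKer_eq_profile d hs, ← mul_sub, abs_mul, smul_add]
  rw [integral_const_mul, Measure.integral_comp_smul volume
    (fun z : EuclideanSpace ℝ (Fin d) => |lapProfile d ‖z + (√s)⁻¹ • h‖ - lapProfile d ‖z‖|)
    (√s)⁻¹, finrank_euclideanSpace_fin,
    abs_of_nonneg (a := (4 * Real.pi) ^ (-(d : ℝ) / 2)) (by positivity),
    abs_of_pos (a := s⁻¹) (by positivity), abs_of_pos (a := (√s ^ d)⁻¹) (by positivity),
    abs_of_pos (by positivity), smul_eq_mul, inv_pow, inv_inv]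
  field_simp

/-- `L¹` Hölder modulus of continuity of `Δg_s`. The exponent of `s` is `-1` from the two derivatives
and `-α/2` from rescaling the shift by `s^{-1/2}`. -/
lemma exists_integral_lapKer_sub_le (d : ℕ) {α : ℝ} (hα : 0 < α) (hα1 : α < 1) :
    ∃ M : ℝ, 0 ≤ M ∧ ∀ s : ℝ, 0 < s → ∀ h : EuclideanSpace ℝ (Fin d),
      ∫ y, |lapKer d s (y + h) - lapKer d s y| ≤ M * ‖h‖ ^ α * s ^ (-1 - α / 2) := by
  obtain ⟨M, hM, H⟩ := exists_integral_lapProfile_sub_le d hα hα1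
  refine ⟨(4 * Real.pi) ^ (-(d : ℝ) / 2) * M, by positivity, fun s hs h => ?_⟩
  have e : s ^ (-1 - α / 2) = s⁻¹ * (√s)⁻¹ ^ α := by
    rw [Real.sqrt_eq_rpow, ← Real.rpow_neg hs.le, ← Real.rpow_mul hs.le, ← Real.rpow_neg_one,
      ← Real.rpow_add hs]
    congr 1
    ring
  rw [integral_abs_lapKer_sub d hs, e]
  calc _ ≤ (4 * Real.pi) ^ (-(d : ℝ) / 2) * s⁻¹ * (M * ‖(√s)⁻¹ • h‖ ^ α) := by
        gcongr; exact H _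
    _ = _ := by
        rw [norm_smul, Real.norm_of_nonneg (by positivity),
          Real.mul_rpow (by positivity) (norm_nonneg _)]
        ring

/-! ### Convolution with a bounded function -/

lemma integrable_lapKer_add_mul (d : ℕ) {s B : ℝ} (hs : 0 < s) {f : EuclideanSpace ℝ (Fin d) → ℝ}
    (hf : Measurable f) (hB : ∀ x, |f x| ≤ B) (h x : EuclideanSpace ℝ (Fin d)) :
    Integrable fun y => lapKer d s (y + h) * f (x - y) :=
  ((integrable_lapKer d hs).comp_add_right h).mul_bdd (c := B)
    (hf.comp (by fun_prop)).aestronglyMeasurable (Filter.Eventually.of_forall fun y => hB _)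

lemma abs_conv_le (d : ℕ) {s B : ℝ} (hs : 0 < s) {f : EuclideanSpace ℝ (Fin d) → ℝ}
    (hB : ∀ x, |f x| ≤ B) (x : EuclideanSpace ℝ (Fin d)) :
    |∫ y, lapKer d s y * f (x - y)| ≤ B * ∫ y, |lapKer d s y| := by
  rw [← integral_const_mul, ← Real.norm_eq_abs]
  refine norm_integral_le_of_norm_le ((integrable_lapKer d hs).abs.const_mul B)
    (Filter.Eventually.of_forall fun y => ?_)
  rw [norm_mul, mul_comm]
  exact mul_le_mul_of_nonneg_right (hB _) (abs_nonneg _)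

lemma abs_conv_sub_le (d : ℕ) {s B : ℝ} (hs : 0 < s) {f : EuclideanSpace ℝ (Fin d) → ℝ}
    (hf : Measurable f) (hB : ∀ x, |f x| ≤ B) (h x : EuclideanSpace ℝ (Fin d)) :
    |(∫ y, lapKer d s y * f (x + h - y)) - ∫ y, lapKer d s y * f (x - y)| ≤
      B * ∫ y, |lapKer d s (y + h) - lapKer d s y| := by
  have e : (∫ y, lapKer d s y * f (x + h - y)) = ∫ y, lapKer d s (y + h) * f (x - y) := by
    rw [← integral_add_right_eq_self (fun y => lapKer d s y * f (x + h - y)) h]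
    simp only [add_sub_add_right_eq_sub]
  have h0 := integrable_lapKer_add_mul d hs hf hB 0 x
  simp only [add_zero] at h0
  have hi := integrable_lapKer d hs
  rw [e, ← integral_sub (integrable_lapKer_add_mul d hs hf hB h x) h0, ← integral_const_mul,
    ← Real.norm_eq_abs]
  refine norm_integral_le_of_norm_le (((hi.comp_add_right h).sub hi).abs.const_mul B)
    (Filter.Eventually.of_forall fun y => ?_)
  rw [← sub_mul, norm_mul, mul_comm]
  exact mul_le_mul_of_nonneg_right (hB _) (abs_nonneg _)

/-! ### Integration in time -/

lemma integrableOn_sub_rpow {a t : ℝ} (ha : -1 < a) (ht : 0 < t) :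
    IntegrableOn (fun s => (t - s) ^ a) (Set.Ioo 0 t) := by
  have h := (intervalIntegral.intervalIntegrable_rpow' (a := 0) (b := t) ha).comp_sub_left t
  simp only [sub_zero, sub_self] at h
  exact ((intervalIntegrable_iff_integrableOn_Ioo_of_le ht.le).1 h.symm)

lemma integral_sub_rpow {a t : ℝ} (ha : -1 < a) (ht : 0 < t) :
    ∫ s in Set.Ioo 0 t, (t - s) ^ a = t ^ (a + 1) / (a + 1) := by
  rw [← integral_Ioc_eq_integral_Ioo, ← intervalIntegral.integral_of_le ht.le,
    intervalIntegral.integral_comp_sub_left (fun r => r ^ a) t, sub_self, sub_zero,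
    integral_rpow (Or.inl ha), Real.zero_rpow (by linarith), sub_zero]

/-- The convolution is integrable in time: it is bounded by a multiple of `(t - s) ^ (α - 1)`. -/
lemma integrableOn_conv (d : ℕ) {α ν t W : ℝ} (hα : 0 < α) (hν : 0 < ν) (ht : 0 < t)
    {w : ℝ → EuclideanSpace ℝ (Fin d) → ℝ} (hw : Measurable (Function.uncurry w))
    (hB : ∀ s ∈ Set.Ioo (0 : ℝ) t, ∀ x, |w s x| ≤ W * (t - s) ^ α)
    (x : EuclideanSpace ℝ (Fin d)) :
    IntegrableOn (fun s => ∫ y, lapKer d (ν * (t - s)) y * w s (x - y)) (Set.Ioo 0 t) := by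
  set I := ∫ z : EuclideanSpace ℝ (Fin d), |lapProfile d ‖z‖|
  refine ((integrableOn_sub_rpow (a := α - 1) (by linarith) ht).const_mul
    (W * ((4 * Real.pi) ^ (-(d : ℝ) / 2) * ν⁻¹ * I))).mono' ?_ ?_
  -- Joint measurability is read off the closed form of `lapKer`, valid on `(0, t)` only.
  · have hm : Measurable fun p : ℝ × EuclideanSpace ℝ (Fin d) =>
        (heatKer d (ν * (t - p.1)) p.2 * (‖p.2‖ ^ 2 / (4 * (ν * (t - p.1)) ^ 2) -
          d / (2 * (ν * (t - p.1))))) * w p.1 (x - p.2) := by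
      have h1 : Measurable fun p : ℝ × EuclideanSpace ℝ (Fin d) => w p.1 (x - p.2) :=
        hw.comp (f := fun p : ℝ × EuclideanSpace ℝ (Fin d) => (p.1, x - p.2)) (by fun_prop)
      unfold heatKer
      refine Measurable.mul ?_ h1
      fun_prop
    refine (hm.stronglyMeasurable.integral_prod_right'
      (ν := (volume : Measure (EuclideanSpace ℝ (Fin d))))).aestronglyMeasurable.congr ?_
    filter_upwards [ae_restrict_mem measurableSet_Ioo] with s hs
    refine integral_congr_ae (Filter.Eventually.of_forall fun y => ?_)
    simp only
    rw [lapKer_eq_s18 d (mul_pos hν (sub_pos.2 hs.2))]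
  · filter_upwards [ae_restrict_mem measurableSet_Ioo] with s hs
    have hts : 0 < t - s := sub_pos.2 hs.2
    have h := abs_conv_le d (mul_pos hν hts) (hB s hs) x
    rw [integral_abs_lapKer d (mul_pos hν hts)] at h
    rw [Real.norm_eq_abs]
    refine h.trans_eq ?_
    rw [Real.rpow_sub_one hts.ne', mul_inv]
    ring

/-- Let `0 < α < 1`, `ν > 0`, `T > 0`, `t ∈ (0,T]`, `W ≥ 0`, and let `w` be jointly
measurable with `‖w(s,·)‖_{L^∞} ≤ W (t-s)^α` for `s ∈ (0,t)`. Then there is `C` depending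
only on `d, α, ν, T` such that for every `h ≠ 0`, the finite difference of
`F(x) = ∫_0^t ((Δg_{ν(t-s)}) * w(s,·))(x) ds` satisfies `‖F(·+h) - F‖_{L^∞} ≤ C W |h|^α`. -/
theorem lapKer_time_integral_holder_difference (d : ℕ) (α ν T : ℝ)
    (hα : 0 < α) (hα1 : α < 1) (hν : 0 < ν) (hT : 0 < T) :
    ∃ C : ℝ, 0 < C ∧
      ∀ (t W : ℝ) (w : ℝ → EuclideanSpace ℝ (Fin d) → ℝ),
        t ∈ Set.Ioc (0 : ℝ) T → 0 ≤ W → Measurable (Function.uncurry w) →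
        (∀ s ∈ Set.Ioo (0 : ℝ) t, ∀ x, |w s x| ≤ W * (t - s) ^ α) →
        ∀ h : EuclideanSpace ℝ (Fin d), h ≠ 0 →
        ∀ x, |(∫ s in Set.Ioo (0 : ℝ) t, ∫ y, lapKer d (ν * (t - s)) y * w s (x + h - y)) -
              (∫ s in Set.Ioo (0 : ℝ) t, ∫ y, lapKer d (ν * (t - s)) y * w s (x - y))| ≤
          C * W * ‖h‖ ^ α := by
  obtain ⟨M, hM, H⟩ := exists_integral_lapKer_sub_le d hα hα1
  -- The summand `1` only serves to make the constant positive when `M = 0`.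
  refine ⟨M * ν ^ (-1 - α / 2) * (T ^ (α / 2) / (α / 2)) + 1, by positivity, ?_⟩
  intro t W w ht hW hw hB h _ x
  have ha : -1 < α / 2 - 1 := by linarith
  rw [← integral_sub (integrableOn_conv d hα hν ht.1 hw hB (x + h))
    (integrableOn_conv d hα hν ht.1 hw hB x), ← Real.norm_eq_abs]
  have hle := norm_integral_le_of_norm_le (μ := volume.restrict (Set.Ioo 0 t))
    (f := fun s => (∫ y, lapKer d (ν * (t - s)) y * w s (x + h - y)) -
      ∫ y, lapKer d (ν * (t - s)) y * w s (x - y))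
    ((integrableOn_sub_rpow ha ht.1).const_mul (W * (M * ‖h‖ ^ α * ν ^ (-1 - α / 2)))) ?_
  · refine hle.trans ?_
    rw [integral_const_mul, integral_sub_rpow ha ht.1, sub_add_cancel]
    have h1 : t ^ (α / 2) ≤ T ^ (α / 2) := Real.rpow_le_rpow ht.1.le ht.2 (by positivity)
    calc _ ≤ W * (M * ‖h‖ ^ α * ν ^ (-1 - α / 2)) * (T ^ (α / 2) / (α / 2)) := by gcongr
      _ ≤ W * (M * ‖h‖ ^ α * ν ^ (-1 - α / 2)) * (T ^ (α / 2) / (α / 2)) + W * ‖h‖ ^ α :=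
        le_add_of_nonneg_right (by positivity)
      _ = _ := by ring
  · filter_upwards [ae_restrict_mem measurableSet_Ioo] with s hs
    have hts : 0 < t - s := sub_pos.2 hs.2
    have hWs : 0 ≤ W * (t - s) ^ α := by positivity
    have hmeas : Measurable (w s) := hw.comp measurable_prodMk_left
    refine (abs_conv_sub_le d (mul_pos hν hts) hmeas (hB s hs) h x).trans ?_
    refine (mul_le_mul_of_nonneg_left (H _ (mul_pos hν hts) h) hWs).trans_eq ?_
    have e : (t - s) ^ (α / 2 - 1) = (t - s) ^ α * (t - s) ^ (-1 - α / 2) := by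
      rw [← Real.rpow_add hts]
      congr 1
      ring
    rw [e, Real.mul_rpow hν.le hts.le]
    ring
end
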